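/- Let λ be irrational and let a, λa, t₀, …, t_n be real numbers that are linearly independent over ℚ. Suppose an axis-parallel rectangle with good side lengths Z (horizontal) and W (vertical) is partitioned into finitely many axis-parallel rectangles with pairwise disjoint interiors whose union is the whole rectangle, each having good side lengths. Then for every real x, the x-area of the big rectangle equals the sum of the x-areas of the pieces, i.e., Ẑ(x)·Ŵ(x) = Σᵢ ẑᵢ(x)·ŵᵢ(x), where zᵢ, wᵢ are the horizontal and vertical side lengths of the i-th piece. -/

import Mathlib

/-!
The `x`-area is `f z * f w` for a `ℚ`-linear map `f : ℝ → ℝ` with `f a = 1`, `f (λa) = x` and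
`f tᵢ = 0`, which exists by linear independence (`exists_functional`). It therefore suffices to
show that `(z, w) ↦ f z * f w` is additive over tilings for every such `f` (`tiling_additive`).

Let `S` be the finite set of all coordinates of sides occurring in the tiling, and let `ε > 0` be
smaller than every gap between elements of `S`. The operator
`φ ↦ ∑ s ∈ S, f s * (φ (s - ε) - φ (s + ε))` is visibly linear in `φ` and sends the indicator
function of `[u, v]` with `u < v` in `S` to `f v - f u` (`sum_jump`). Applied in both variables, it
sends the indicator function of a rectangle to the product of the `f`-values of its sides. Off the
grid lines the indicator function of the big rectangle is the sum of those of the pieces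
(`sum_ind_eq`), and the operator only samples points `s ± ε` off the grid, so the identity follows.
-/

open Set

/-- The closed axis-parallel rectangle with lower-left corner `p`, width `z`, height `w`. -/
def axisRect (p : ℝ × ℝ) (z w : ℝ) : Set (ℝ × ℝ) :=
  Icc p.1 (p.1 + z) ×ˢ Icc p.2 (p.2 + w)

/-- The real-valued indicator function of `[u, v]`. -/
noncomputable def ind (u v q : ℝ) : ℝ := if u ≤ q ∧ q ≤ v then 1 else 0

/-- `ε` is positive and smaller than every positive gap between elements of `S`. -/
def GapBound (S : Finset ℝ) (ε : ℝ) : Prop :=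
  0 < ε ∧ ∀ s ∈ S, ∀ s' ∈ S, s < s' → s + ε < s'

lemma exists_gapBound (S : Finset ℝ) : ∃ ε, GapBound S ε := by
  have h : ∀ᶠ ε in nhdsWithin (0 : ℝ) (Ioi 0), ∀ s ∈ S, ∀ s' ∈ S, s < s' → s + ε < s' := by
    rw [Filter.eventually_all_finset]
    intro s _
    rw [Filter.eventually_all_finset]
    intro s' _
    by_cases hs : s < s'
    · filter_upwards [Ioo_mem_nhdsGT (sub_pos.2 hs)] with ε hε _
      linarith [hε.2]
    · exact Filter.Eventually.of_forall fun _ h => absurd h hs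
  obtain ⟨ε, h1, h2⟩ := (h.and self_mem_nhdsWithin).exists
  exact ⟨ε, h2, h1⟩

lemma GapBound.add_notMem {S : Finset ℝ} {ε s : ℝ} (h : GapBound S ε) (hs : s ∈ S) :
    s + ε ∉ S := fun h' => by
  have := h.2 s hs _ h' (by linarith [h.1])
  exact lt_irrefl _ this

lemma GapBound.sub_notMem {S : Finset ℝ} {ε s : ℝ} (h : GapBound S ε) (hs : s ∈ S) :
    s - ε ∉ S := fun h' => by
  have := h.2 _ h' s hs (by linarith [h.1])
  linarith

/-- The jump operator recovers `f v - f u` from the indicator function of `[u, v]`. -/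
lemma sum_jump {S : Finset ℝ} {ε : ℝ} (h : GapBound S ε) (f : ℝ → ℝ) {u v : ℝ}
    (hu : u ∈ S) (hv : v ∈ S) (huv : u < v) :
    ∑ s ∈ S, f s * (ind u v (s - ε) - ind u v (s + ε)) = f v - f u := by
  have key : ∀ s ∈ S, f s * (ind u v (s - ε) - ind u v (s + ε)) =
      (if s = v then f s else 0) - (if s = u then f s else 0) := by
    intro s hs
    have h0 := h.1
    have h1 := h.2 s hs u hu
    have h2 := h.2 u hu s hs
    have h3 := h.2 s hs v hv
    have h4 := h.2 v hv s hs
    unfold ind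
    rcases lt_trichotomy s u with hsu | hsu | hsu
    · have := h1 hsu
      rw [if_neg (by intro h; linarith [h.1]), if_neg (by intro h; linarith [h.1]),
        if_neg (by linarith), if_neg (by linarith)]
      ring
    · have := h3 (by linarith)
      rw [if_neg (by intro h; linarith [h.1]), if_pos ⟨by linarith, by linarith⟩,
        if_neg (by linarith), if_pos hsu]
      ring
    · have := h2 hsu
      rcases lt_trichotomy s v with hsv | hsv | hsv
      · have := h3 hsv
        rw [if_pos ⟨by linarith, by linarith⟩, if_pos ⟨by linarith, by linarith⟩,
          if_neg (by linarith), if_neg (by linarith)]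
        ring
      · rw [if_pos ⟨by linarith, by linarith⟩, if_neg (by intro h; linarith [h.2]),
          if_pos hsv, if_neg (by linarith)]
        ring
      · have := h4 hsv
        rw [if_neg (by intro h; linarith [h.2]), if_neg (by intro h; linarith [h.2]),
          if_neg (by linarith), if_neg (by linarith)]
        ring
  rw [Finset.sum_congr rfl key, Finset.sum_sub_distrib]
  simp [hu, hv]

lemma ind_mul_ind (p : ℝ × ℝ) (z w q r : ℝ) [Decidable ((q, r) ∈ axisRect p z w)] :
    ind p.1 (p.1 + z) q * ind p.2 (p.2 + w) r = if (q, r) ∈ axisRect p z w then 1 else 0 := by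
  simp only [ind, axisRect, mem_prod, mem_Icc]
  split_ifs <;> first | (exfalso; tauto) | simp

lemma mem_interior_axisRect {p : ℝ × ℝ} {z w q r : ℝ} (h : (q, r) ∈ axisRect p z w)
    (h1 : q ≠ p.1) (h2 : q ≠ p.1 + z) (h3 : r ≠ p.2) (h4 : r ≠ p.2 + w) :
    (q, r) ∈ interior (axisRect p z w) := by
  simp only [axisRect, mem_prod, mem_Icc] at h
  rw [axisRect, interior_prod_eq, interior_Icc, interior_Icc]
  exact ⟨⟨lt_of_le_of_ne h.1.1 h1.symm, lt_of_le_of_ne h.1.2 h2⟩,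
    ⟨lt_of_le_of_ne h.2.1 h3.symm, lt_of_le_of_ne h.2.2 h4⟩⟩

/-- Off the grid lines, the indicator function of the big rectangle is the sum of the indicator
functions of the pieces: a covered point lies in the interior of each piece containing it, hence in
exactly one piece. -/
lemma sum_ind_eq {P : ℝ × ℝ} {Z W : ℝ} {k : ℕ} {pos : Fin k → ℝ × ℝ} {z w : Fin k → ℝ}
    (hdisj : ∀ j j', j ≠ j' →
      interior (axisRect (pos j) (z j) (w j)) ∩
        interior (axisRect (pos j') (z j') (w j')) = ∅)
    (hunion : (⋃ j, axisRect (pos j) (z j) (w j)) = axisRect P Z W)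
    {S : Finset ℝ}
    (hS : ∀ j, (pos j).1 ∈ S ∧ (pos j).1 + z j ∈ S ∧ (pos j).2 ∈ S ∧ (pos j).2 + w j ∈ S)
    {q r : ℝ} (hq : q ∉ S) (hr : r ∉ S) :
    ind P.1 (P.1 + Z) q * ind P.2 (P.2 + W) r =
      ∑ j, ind (pos j).1 ((pos j).1 + z j) q * ind (pos j).2 ((pos j).2 + w j) r := by
  classical
  simp only [ind_mul_ind]
  have hint : ∀ j, (q, r) ∈ axisRect (pos j) (z j) (w j) →
      (q, r) ∈ interior (axisRect (pos j) (z j) (w j)) := fun j h => by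
    obtain ⟨h1, h2, h3, h4⟩ := hS j
    exact mem_interior_axisRect h (fun e => hq (e ▸ h1)) (fun e => hq (e ▸ h2))
      (fun e => hr (e ▸ h3)) (fun e => hr (e ▸ h4))
  rw [← hunion]
  by_cases hex : ∃ j, (q, r) ∈ axisRect (pos j) (z j) (w j)
  · rw [if_pos (mem_iUnion.2 hex)]
    obtain ⟨j, hj⟩ := hex
    rw [Finset.sum_eq_single j, if_pos hj]
    · intro j' _ hne
      refine if_neg fun hj' => ?_
      have : (q, r) ∈ (∅ : Set (ℝ × ℝ)) := hdisj j' j hne ▸ ⟨hint j' hj', hint j hj⟩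
      exact this
    · exact fun h => absurd (Finset.mem_univ j) h
  · rw [if_neg fun h => hex (mem_iUnion.1 h)]
    exact (Finset.sum_eq_zero fun j _ => if_neg fun h => hex ⟨j, h⟩).symm

/-- For additive `f`, the product of the `f`-values of the two sides is additive over tilings. -/
lemma tiling_additive (f : ℝ →ₗ[ℚ] ℝ) {P : ℝ × ℝ} {Z W : ℝ} (hZ : 0 < Z) (hW : 0 < W)
    {k : ℕ} {pos : Fin k → ℝ × ℝ} {z w : Fin k → ℝ}
    (hz : ∀ j, 0 < z j) (hw : ∀ j, 0 < w j)
    (hdisj : ∀ j j', j ≠ j' →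
      interior (axisRect (pos j) (z j) (w j)) ∩
        interior (axisRect (pos j') (z j') (w j')) = ∅)
    (hunion : (⋃ j, axisRect (pos j) (z j) (w j)) = axisRect P Z W) :
    f Z * f W = ∑ j, f (z j) * f (w j) := by
  classical
  obtain ⟨S, hSP, hS⟩ : ∃ S : Finset ℝ,
      (P.1 ∈ S ∧ P.1 + Z ∈ S ∧ P.2 ∈ S ∧ P.2 + W ∈ S) ∧
      ∀ j, (pos j).1 ∈ S ∧ (pos j).1 + z j ∈ S ∧ (pos j).2 ∈ S ∧ (pos j).2 + w j ∈ S := by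
    refine ⟨{P.1, P.1 + Z, P.2, P.2 + W} ∪ Finset.univ.biUnion fun j =>
      {(pos j).1, (pos j).1 + z j, (pos j).2, (pos j).2 + w j}, by simp, fun j => ?_⟩
    refine ⟨?_, ?_, ?_, ?_⟩ <;>
    · refine Finset.mem_union_right _ (Finset.mem_biUnion.2 ⟨j, Finset.mem_univ j, ?_⟩)
      simp
  obtain ⟨ε, hε⟩ := exists_gapBound S
  have hprod : ∀ (p : ℝ × ℝ) (c d : ℝ), 0 < c → 0 < d →
      (p.1 ∈ S ∧ p.1 + c ∈ S ∧ p.2 ∈ S ∧ p.2 + d ∈ S) →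
      f c * f d = ∑ s ∈ S, ∑ s' ∈ S,
        f s * (ind p.1 (p.1 + c) (s - ε) - ind p.1 (p.1 + c) (s + ε)) *
        (f s' * (ind p.2 (p.2 + d) (s' - ε) - ind p.2 (p.2 + d) (s' + ε))) := by
    rintro p c d hc hd ⟨h1, h2, h3, h4⟩
    rw [← Finset.sum_mul_sum, sum_jump hε f h1 h2 (by linarith),
      sum_jump hε f h3 h4 (by linarith), map_add, map_add]
    ring
  rw [hprod P Z W hZ hW hSP,
    Finset.sum_congr rfl fun j _ => hprod (pos j) (z j) (w j) (hz j) (hw j) (hS j),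
    Finset.sum_comm (s := Finset.univ)]
  refine Finset.sum_congr rfl fun s hs => ?_
  rw [Finset.sum_comm (s := Finset.univ)]
  refine Finset.sum_congr rfl fun s' hs' => ?_
  have e1 := sum_ind_eq hdisj hunion hS (hε.sub_notMem hs) (hε.sub_notMem hs')
  have e2 := sum_ind_eq hdisj hunion hS (hε.sub_notMem hs) (hε.add_notMem hs')
  have e3 := sum_ind_eq hdisj hunion hS (hε.add_notMem hs) (hε.sub_notMem hs')
  have e4 := sum_ind_eq hdisj hunion hS (hε.add_notMem hs) (hε.add_notMem hs')
  have hexp : ∀ A A' B B' : ℝ, f s * (A - A') * (f s' * (B - B')) =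
      f s * f s' * (A * B - A * B' - A' * B + A' * B') := fun _ _ _ _ => by ring
  simp only [hexp]
  rw [← Finset.mul_sum, e1, e2, e3, e4, Finset.sum_add_distrib, Finset.sum_sub_distrib,
    Finset.sum_sub_distrib]

/-- A `ℚ`-linear `f : ℝ → ℝ` whose value at a good number `y` is `ŷ(x)`. -/
lemma exists_functional {lam a : ℝ} {N : ℕ} {t : Fin N → ℝ}
    (hind : LinearIndependent ℚ (Fin.cons a (Fin.cons (lam * a) t) : Fin (N + 2) → ℝ)) (x : ℝ) :
    ∃ f : ℝ →ₗ[ℚ] ℝ, ∀ (y : ℝ) (y₀ y₁ : ℚ),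
      y - (y₀ : ℝ) * a - (y₁ : ℝ) * (lam * a) ∈ Submodule.span ℚ (Set.range t) →
      f y = (y₀ : ℝ) + (y₁ : ℝ) * x := by
  set v : Fin (N + 2) → ℝ := Fin.cons a (Fin.cons (lam * a) t) with hv
  set c : Fin (N + 2) → ℝ := Fin.cons 1 (Fin.cons x fun _ => 0) with hc
  obtain ⟨f, hf⟩ := LinearMap.exists_extend
    ((Finsupp.linearCombination ℚ c).comp (hind.repr : _ →ₗ[ℚ] (Fin (N + 2) →₀ ℚ)))
  have hfv : ∀ i, f (v i) = c i := fun i => by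
    have h := LinearMap.congr_fun hf ⟨v i, Submodule.subset_span ⟨i, rfl⟩⟩
    simpa [hind.repr_eq_single i ⟨v i, Submodule.subset_span ⟨i, rfl⟩⟩ rfl] using h
  have hfa : f a = 1 := hfv 0
  have hfl : f (lam * a) = x := hfv 1
  have hft : ∀ i, f (t i) = 0 := fun i => hfv i.succ.succ
  refine ⟨f, fun y y₀ y₁ hy => ?_⟩
  have hle : Submodule.span ℚ (Set.range t) ≤ LinearMap.ker f :=
    Submodule.span_le.2 (by rintro _ ⟨i, rfl⟩; exact hft i)
  have h0 : f (y - (y₀ : ℝ) * a - (y₁ : ℝ) * (lam * a)) = 0 := hle hy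
  rw [← Rat.smul_def, ← Rat.smul_def, map_sub, map_sub, map_smul, map_smul, hfa, hfl,
    Rat.smul_def, Rat.smul_def] at h0
  linarith

/-- Let `λ` be irrational and let `a, λa, t₀, …, t_n` be reals linearly independent
over `ℚ`.  If an axis-parallel rectangle with good side lengths `Z` (horizontal) and `W`
(vertical) is partitioned into finitely many axis-parallel rectangles with pairwise
disjoint interiors and good side lengths `zⱼ`, `wⱼ`, then for every real `x` the
`x`-area of the big rectangle equals the sum of the `x`-areas of the pieces:
`(Z₀ + Z₁ x)(W₀ + W₁ x) = Σⱼ (z₀ⱼ + z₁ⱼ x)(w₀ⱼ + w₁ⱼ x)`,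
where the rational numbers `z₀, z₁` are the coefficients of `a` and `λa` in the
(unique) representation of a good number `z` in the basis `a, λa, t₀, …, t_n`. -/
theorem xArea_additive (lam a : ℝ) (hirr : Irrational lam) (ha : 0 < a)
    (N : ℕ) (t : Fin N → ℝ)
    (hind : LinearIndependent ℚ (Fin.cons a (Fin.cons (lam * a) t) : Fin (N + 2) → ℝ))
    -- the big rectangle and its partition into pieces
    (P : ℝ × ℝ) (Z W : ℝ) (hZ : 0 < Z) (hW : 0 < W)
    (k : ℕ) (pos : Fin k → ℝ × ℝ) (z w : Fin k → ℝ)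
    (hz : ∀ j, 0 < z j) (hw : ∀ j, 0 < w j)
    (hdisj : ∀ j j', j ≠ j' →
      interior (axisRect (pos j) (z j) (w j)) ∩
        interior (axisRect (pos j') (z j') (w j')) = ∅)
    (hunion : (⋃ j, axisRect (pos j) (z j) (w j)) = axisRect P Z W)
    -- all side lengths are good, with the indicated coefficients at `a` and `λa`
    (Z₀ Z₁ W₀ W₁ : ℚ) (z₀ z₁ w₀ w₁ : Fin k → ℚ)
    (hZgood : Z - (Z₀ : ℝ) * a - (Z₁ : ℝ) * (lam * a) ∈
      Submodule.span ℚ (Set.range t))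
    (hWgood : W - (W₀ : ℝ) * a - (W₁ : ℝ) * (lam * a) ∈
      Submodule.span ℚ (Set.range t))
    (hzgood : ∀ j, z j - (z₀ j : ℝ) * a - (z₁ j : ℝ) * (lam * a) ∈
      Submodule.span ℚ (Set.range t))
    (hwgood : ∀ j, w j - (w₀ j : ℝ) * a - (w₁ j : ℝ) * (lam * a) ∈
      Submodule.span ℚ (Set.range t)) :
    ∀ x : ℝ, ((Z₀ : ℝ) + (Z₁ : ℝ) * x) * ((W₀ : ℝ) + (W₁ : ℝ) * x) =
      ∑ j : Fin k, ((z₀ j : ℝ) + (z₁ j : ℝ) * x) * ((w₀ j : ℝ) + (w₁ j : ℝ) * x) := by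
  intro x
  obtain ⟨f, hf⟩ := exists_functional hind x
  have h := tiling_additive f hZ hW hz hw hdisj hunion
  rw [hf Z Z₀ Z₁ hZgood, hf W W₀ W₁ hWgood] at h
  rw [h]
  exact Finset.sum_congr rfl fun j _ => by
    rw [hf _ _ _ (hzgood j), hf _ _ _ (hwgood j)]
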